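/- Suppose S_n(t), S̄_n(t) ∈ ℂ^N and v_n(t) ∈ ℂ (n ∈ ℤ, t ∈ ℝ, differentiable in t) satisfy the discrete multicomponent Yajima–Oikawa system (dgvYO) with constant c ∈ ℂ. Then for all n and t the following conservation law holds: d/dt (⟨S_{n+1}, S̄_n⟩ + ⟨S_n, S̄_{n+1}⟩) = Δ⁺[ −i v_n (⟨S_{n+1}, S̄_{n−1}⟩ − ⟨S_{n−1}, S̄_{n+1}⟩) ], i.e., the time derivative of ⟨S_{n+1}, S̄_n⟩ + ⟨S_n, S̄_{n+1}⟩ equals −i v_{n+1}(⟨S_{n+2}, S̄_n⟩ − ⟨S_n, S̄_{n+2}⟩) + i v_n(⟨S_{n+1}, S̄_{n−1}⟩ − ⟨S_{n−1}, S̄_{n+1}⟩). -/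

import Mathlib

open Complex BigOperators

/-- Bilinear pairing on `ℂ^N` (no complex conjugation). -/
noncomputable def pair {N : ℕ} (a b : Fin N → ℂ) : ℂ := ∑ k, a k * b k

/-!
The two vector equations of the system read `i S_t = L S` and `i S̄_t = -L S̄` with one and the same
hopping operator `(L x)_n = v_n (x_{n+1} + x_{n-1}) - c x_n`. The product rule therefore gives
`i d/dt ⟨S_m, S̄_k⟩ = ⟨(L S)_m, S̄_k⟩ - ⟨S_m, (L S̄)_k⟩`, from which `c` drops out. For `(m, k)`
equal to `(n+1, n)` and `(n, n+1)` the on-site terms `v_{n+1} ⟨S_n, S̄_n⟩` and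
`v_n ⟨S_{n+1}, S̄_{n+1}⟩` enter with opposite signs, and what remains of the sum is a forward
difference.
-/

/-- The hopping operator `L` on two-sided sequences at a fixed time: the vector equations of the
Yajima–Oikawa lattice are `i S_t = L S` and `i S̄_t = -L S̄`. -/
def hopping {R M : Type*} [Ring R] [AddCommGroup M] [Module R M] (v : ℤ → R) (c : R) (x : ℤ → M) :
    ℤ → M :=
  fun n => v n • (x (n + 1) + x (n - 1)) - c • x n

section Algebra

variable {R M₁ M₂ M : Type*} [CommRing R] [AddCommGroup M₁] [AddCommGroup M₂] [AddCommGroup M]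
  [Module R M₁] [Module R M₂] [Module R M]

theorem bilin_hopping_left_sub_right (B : M₁ →ₗ[R] M₂ →ₗ[R] M) (v : ℤ → R) (c : R)
    (x : ℤ → M₁) (y : ℤ → M₂) (m k : ℤ) :
    B (hopping v c x m) (y k) - B (x m) (hopping v c y k) =
      v m • (B (x (m + 1)) (y k) + B (x (m - 1)) (y k)) -
        v k • (B (x m) (y (k + 1)) + B (x m) (y (k - 1))) := by
  simp only [hopping, map_sub, map_smul, map_add, LinearMap.sub_apply, LinearMap.smul_apply,
    LinearMap.add_apply]
  abel

theorem hopping_green_identity (B : M₁ →ₗ[R] M₂ →ₗ[R] M) (v : ℤ → R) (c : R)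
    (x : ℤ → M₁) (y : ℤ → M₂) (n : ℤ) :
    (B (hopping v c x (n + 1)) (y n) - B (x (n + 1)) (hopping v c y n)) +
        (B (hopping v c x n) (y (n + 1)) - B (x n) (hopping v c y (n + 1))) =
      v (n + 1) • (B (x (n + 2)) (y n) - B (x n) (y (n + 2))) -
        v n • (B (x (n + 1)) (y (n - 1)) - B (x (n - 1)) (y (n + 1))) := by
  have succ_succ : n + 1 + 1 = n + 2 := by ring
  simp only [bilin_hopping_left_sub_right, succ_succ, add_sub_cancel_right]
  module

end Algebra

theorem eq_neg_I_smul_of_I_smul_eq {M : Type*} [AddCommGroup M] [Module ℂ M] {x y : M}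
    (h : I • x = y) : x = -I • y := by
  rwa [← inv_I, eq_inv_smul_iff₀ I_ne_zero]

section Evolution

variable {E F G : Type*} [NormedAddCommGroup E] [NormedAddCommGroup F] [NormedAddCommGroup G]
  [NormedSpace ℂ E] [NormedSpace ℂ F] [NormedSpace ℂ G]

theorem hasDerivAt_bilin_of_I_smul_eq (B : E →L[ℂ] F →L[ℂ] G)
    {f : ℝ → E} {g : ℝ → F} {f' a : E} {g' b : F} {t : ℝ}
    (hf : HasDerivAt f f' t) (hg : HasDerivAt g g' t) (ha : I • f' = a) (hb : I • g' = -b) :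
    HasDerivAt (fun s => B (f s) (g s)) (-I • (B a (g t) - B (f t) b)) t := by
  have product_rule : HasDerivAt (fun s => B (f s) (g s)) (B (f t) g' + B f' (g t)) t :=
    (B.bilinearRestrictScalars ℝ).hasDerivAt_of_bilinear (fun _ => hf) (fun _ => hg)
  convert product_rule using 1
  rw [eq_neg_I_smul_of_I_smul_eq ha, eq_neg_I_smul_of_I_smul_eq hb]
  simp only [map_smul, map_neg, smul_apply]
  module

theorem stmt8_general (B : E →L[ℂ] F →L[ℂ] G) {S : ℤ → ℝ → E} {Sb : ℤ → ℝ → F}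
    {S' : ℤ → E} {Sb' : ℤ → F} {v : ℤ → ℂ} {c : ℂ} {t : ℝ}
    (hS : ∀ n, HasDerivAt (S n) (S' n) t) (hSb : ∀ n, HasDerivAt (Sb n) (Sb' n) t)
    (hS_eq : ∀ n, I • S' n = v n • (S (n + 1) t + S (n - 1) t) - c • S n t)
    (hSb_eq : ∀ n, I • Sb' n = -(v n • (Sb (n + 1) t + Sb (n - 1) t)) + c • Sb n t) (n : ℤ) :
    HasDerivAt (fun s => B (S (n + 1) s) (Sb n s) + B (S n s) (Sb (n + 1) s))
      ((-I * v (n + 1)) • (B (S (n + 2) t) (Sb n t) - B (S n t) (Sb (n + 2) t)) +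
        (I * v n) • (B (S (n + 1) t) (Sb (n - 1) t) - B (S (n - 1) t) (Sb (n + 1) t))) t := by
  have hSb_hopping (m : ℤ) : I • Sb' m = -hopping v c (Sb · t) m := by
    rw [hSb_eq, hopping, neg_sub, neg_add_eq_sub]
  have hB (m k : ℤ) : HasDerivAt (fun s => B (S m s) (Sb k s))
      (-I • (B (hopping v c (S · t) m) (Sb k t) - B (S m t) (hopping v c (Sb · t) k))) t :=
    hasDerivAt_bilin_of_I_smul_eq B (hS m) (hSb k) (hS_eq m) (hSb_hopping k)
  convert (hB (n + 1) n).fun_add (hB n (n + 1)) using 1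
  calc
    _ = -I • (v (n + 1) • (B (S (n + 2) t) (Sb n t) - B (S n t) (Sb (n + 2) t)) -
          v n • (B (S (n + 1) t) (Sb (n - 1) t) - B (S (n - 1) t) (Sb (n + 1) t))) := by module
    _ = _ := congrArg (-I • ·)
      (hopping_green_identity B.toLinearMap₁₂ v c (S · t) (Sb · t) n).symm
    _ = _ := smul_add _ _ _

end Evolution

/-- The bilinear form `pair` on `ℂ^N` as a continuous bilinear map, built from Mathlib's dot
product. -/
noncomputable def pairCLM (N : ℕ) : (Fin N → ℂ) →L[ℂ] (Fin N → ℂ) →L[ℂ] ℂ :=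
  (dotProductBilin ℂ ℂ).toContinuousBilinearMap

theorem pairCLM_apply {N : ℕ} (a b : Fin N → ℂ) : pairCLM N a b = pair a b := rfl

theorem stmt8 {N : ℕ} (hN : 1 ≤ N)
    (S Sb : ℤ → ℝ → Fin N → ℂ) (v : ℤ → ℝ → ℂ) (c : ℂ)
    (hSd : ∀ n, Differentiable ℝ (S n)) (hSbd : ∀ n, Differentiable ℝ (Sb n))
    (hvd : ∀ n, Differentiable ℝ (v n))
    (h1 : ∀ (n : ℤ) (t : ℝ),
      Complex.I • deriv (S n) t = (v n t) • (S (n+1) t + S (n-1) t) - c • S n t)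
    (h2 : ∀ (n : ℤ) (t : ℝ),
      Complex.I • deriv (Sb n) t = -((v n t) • (Sb (n+1) t + Sb (n-1) t)) + c • Sb n t)
    (h3 : ∀ (n : ℤ) (t : ℝ), deriv (v n) t = (1/2) * v n t *
      ((pair (S (n+1) t) (Sb n t) + pair (S n t) (Sb (n+1) t))
        - (pair (S n t) (Sb (n-1) t) + pair (S (n-1) t) (Sb n t)))) :
    ∀ (n : ℤ) (t : ℝ),
      deriv (fun s => pair (S (n+1) s) (Sb n s) + pair (S n s) (Sb (n+1) s)) t
      = -Complex.I * v (n+1) t * (pair (S (n+2) t) (Sb n t) - pair (S n t) (Sb (n+2) t))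
        + Complex.I * v n t * (pair (S (n+1) t) (Sb (n-1) t) - pair (S (n-1) t) (Sb (n+1) t)) := by
  intro n t
  simpa only [pairCLM_apply, smul_eq_mul] using (stmt8_general (pairCLM N)
    (fun m => (hSd m t).hasDerivAt) (fun m => (hSbd m t).hasDerivAt) (h1 · t) (h2 · t) n).deriv
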